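/- Let A and B be finite dimensional algebras over a field k. If A and B are singularly equivalent of Morita type with level l, then Ω-ext.dim(A) = Ω-ext.dim(B) and ext.dim(Ω^∞(A-mod)) = ext.dim(Ω^∞(B-mod)). -/

import Mathlib

universe u w w₁ w₂ w₃ v v₁ v₂ v₃

open CategoryTheory Limits Pretriangulated

namespace ExtDim



variable (A : Type u) [Ring A]

/-- `X` belongs to `add M`: `X` is a direct summand of a finite direct sum of copies of `M`. -/
def MemAdd (M X : ModuleCat.{u} A) : Prop :=
  ∃ (n : ℕ) (Y : ModuleCat.{u} A), Nonempty ((↥X × ↥Y) ≃ₗ[A] (Fin n → ↥M))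

/-- The operation `𝒞₁ • 𝒞₂` on classes of modules: (summands of) middle terms of short exact
sequences with outer terms in `𝒞₁` and `𝒞₂`. -/
def Bullet (C₁ C₂ : Set (ModuleCat.{u} A)) : Set (ModuleCat.{u} A) :=
  {X | ∃ (X' M₁ M₂ : ModuleCat.{u} A), M₁ ∈ C₁ ∧ M₂ ∈ C₂ ∧
    ∃ (f : ↥M₁ →ₗ[A] (↥X × ↥X')) (g : (↥X × ↥X') →ₗ[A] ↥M₂),
      Function.Injective f ∧ Function.Surjective g ∧ LinearMap.range f = LinearMap.ker g}

/-- The class `[M]_n`. -/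
def bracket (M : ModuleCat.{u} A) : ℕ → Set (ModuleCat.{u} A)
  | 0 => {X | Subsingleton X}
  | n + 1 => Bullet A {X | MemAdd A M X} (bracket M n)

/-- The extension dimension of a subcategory `𝒜` of `A`-mod: the least `m` such that
`𝒜 ⊆ [M]_{m+1}` for some finitely generated module `M`. -/
noncomputable def extDimCat (𝒜 : Set (ModuleCat.{u} A)) : ℕ∞ :=
  sInf {m : ℕ∞ | ∃ n : ℕ, m = n ∧ ∃ M : ModuleCat.{u} A, Module.Finite A M ∧
    ∀ X ∈ 𝒜, X ∈ bracket A M (n + 1)}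

/-- The subcategory of finitely generated modules, `A`-mod. -/
def fgModules : Set (ModuleCat.{u} A) := {X | Module.Finite A X}

/-- The extension dimension of the Artin algebra `A`. -/
noncomputable def extDim : ℕ∞ := extDimCat A (fgModules A)

/-- A short exact sequence `0 → X → Y → Z → 0` of modules. -/
def SES {X Y Z : ModuleCat.{u} A} (f : ↥X →ₗ[A] ↥Y) (g : ↥Y →ₗ[A] ↥Z) : Prop :=
  Function.Injective f ∧ Function.Surjective g ∧ LinearMap.range f = LinearMap.ker g

/-- `Ω^n(A-mod)`: the subcategory of all `n`-th syzygy modules. -/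
def syzygyCat : ℕ → Set (ModuleCat.{u} A)
  | 0 => fgModules A
  | n + 1 => {X | Module.Finite A X ∧ ∃ (P K : ModuleCat.{u} A),
      Module.Finite A P ∧ Module.Projective A P ∧ K ∈ syzygyCat n ∧
      ∃ (f : ↥X →ₗ[A] ↥P) (g : ↥P →ₗ[A] ↥K), SES A f g}

/-- The `Ω`-extension dimension of `A`. -/
noncomputable def omegaExtDim : ℕ∞ := ⨅ i : ℕ, extDimCat A (syzygyCat A i)

/-- `Ω^∞(A-mod)`: modules admitting an exact sequence `0 → X → P₀ → P₁ → ⋯` with all `Pᵢ`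
finitely generated projective. -/
def infSyzygyCat : Set (ModuleCat.{u} A) :=
  {X | Module.Finite A X ∧ ∃ (K P : ℕ → ModuleCat.{u} A), Nonempty (↥(K 0) ≃ₗ[A] ↥X) ∧
    ∀ i, Module.Finite A (P i) ∧ Module.Projective A (P i) ∧
      ∃ (f : ↥(K i) →ₗ[A] ↥(P i)) (g : ↥(P i) →ₗ[A] ↥(K (i + 1))), SES A f g}

/-- `X` has projective dimension at most `n`. -/
def ProjDimLE : ModuleCat.{u} A → ℕ → Prop
  | X, 0 => Module.Projective A X
  | X, n + 1 => ∃ (K P : ModuleCat.{u} A), Module.Projective A P ∧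
      (∃ (f : ↥K →ₗ[A] ↥P) (g : ↥P →ₗ[A] ↥X), SES A f g) ∧ ProjDimLE K n

/-- The projective dimension of a module, as an element of `ℕ∞`. -/
noncomputable def pdim (X : ModuleCat.{u} A) : ℕ∞ :=
  sInf {m : ℕ∞ | ∃ n : ℕ, m = n ∧ ProjDimLE A X n}

/-- `A` has finite global dimension. -/
def HasFiniteGlobalDimension : Prop := ∃ n : ℕ, ∀ X : ModuleCat.{u} A, ProjDimLE A X n

section StableSyzygy

variable (R : Type u) [Ring R]

/-- `K` is (isomorphic to) the kernel of a surjection from a finitely generated projective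
module onto `W`, i.e. a first syzygy of `W`. -/
def IsSyzygyStep (W K : ModuleCat.{u} R) : Prop :=
  ∃ P : ModuleCat.{u} R, Module.Finite R P ∧ Module.Projective R P ∧
    ∃ (f : ↥K →ₗ[R] ↥P) (g : ↥P →ₗ[R] ↥W), SES R f g

/-- `K` is an `l`-th syzygy of `W` (computed from some resolution by finitely generated
projective modules). -/
def IsNthSyzygy : ℕ → ModuleCat.{u} R → ModuleCat.{u} R → Prop
  | 0, W, K => Nonempty (↥K ≃ₗ[R] ↥W)
  | n + 1, W, K => ∃ K₁ : ModuleCat.{u} R, IsSyzygyStep R W K₁ ∧ IsNthSyzygy n K₁ K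

/-- `Z` and `W` are isomorphic in the stable category: they become isomorphic after adding
(finitely generated) projective direct summands to both sides. -/
def StablyIsomorphic (Z W : ModuleCat.{u} R) : Prop :=
  ∃ P Q : ModuleCat.{u} R, Module.Finite R P ∧ Module.Projective R P ∧
    Module.Finite R Q ∧ Module.Projective R Q ∧
    Nonempty ((↥Z × ↥P) ≃ₗ[R] (↥W × ↥Q))

/-- `Z` is isomorphic, in the stable category, to the `l`-th syzygy `Ω^l(W)`. -/
def StablyIsoNthSyzygy (l : ℕ) (Z W : ModuleCat.{u} R) : Prop :=
  ∃ K : ModuleCat.{u} R, IsNthSyzygy R l W K ∧ StablyIsomorphic R Z K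

end StableSyzygy

section TensorData

variable (R : Type u) [Ring R]

/-- `β` is a biadditive `R`-balanced map. -/
def IsBalancedBiadd {X Y T : Type u} [AddCommGroup X] [AddCommGroup Y] [AddCommGroup T]
    [Module Rᵐᵒᵖ X] [Module R Y] (β : X → Y → T) : Prop :=
  (∀ x₁ x₂ y, β (x₁ + x₂) y = β x₁ y + β x₂ y) ∧
  (∀ x y₁ y₂, β x (y₁ + y₂) = β x y₁ + β x y₂) ∧
  (∀ (r : R) x y, β (MulOpposite.op r • x) y = β x (r • y))

/-- `β : X → Y → T` realizes `T` as the tensor product `X ⊗_R Y` of the right `R`-module `X`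
and the left `R`-module `Y`: it is a universal biadditive `R`-balanced map. -/
def IsTensorProductOver {X Y T : Type u} [AddCommGroup X] [AddCommGroup Y] [AddCommGroup T]
    [Module Rᵐᵒᵖ X] [Module R Y] (β : X → Y → T) : Prop :=
  IsBalancedBiadd R β ∧
  ∀ (T' : Type u) [AddCommGroup T'] (β' : X → Y → T'), IsBalancedBiadd R β' →
    ∃! φ : T →+ T', ∀ x y, φ (β x y) = β' x y

end TensorData

section Enveloping

open scoped TensorProduct

variable (k : Type u) [CommRing k] (A : Type u) [Ring A] [Algebra k A]

/-- A `k`-central `A`-`A`-bimodule, regarded as a module over the enveloping algebra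
`A^e = A ⊗[k] Aᵐᵒᵖ`. -/
noncomputable def envModuleCat (T : Type u) [AddCommGroup T] [Module k T] [Module A T]
    [Module Aᵐᵒᵖ T] [IsScalarTower k A T] [IsScalarTower k Aᵐᵒᵖ T] [SMulCommClass A Aᵐᵒᵖ T] :
    ModuleCat.{u} (A ⊗[k] Aᵐᵒᵖ) :=
  letI : Module (A ⊗[k] Aᵐᵒᵖ) T := TensorProduct.Algebra.module
  ModuleCat.of _ T

end Enveloping

section Statement

open scoped TensorProduct

variable (k : Type u) [Field k]
variable (A B : Type u) [Ring A] [Ring B] [Algebra k A] [Algebra k B]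
variable [Module.Finite k A] [Module.Finite k B]
variable (M : Type u) [AddCommGroup M] [Module k M] [Module A M] [Module Bᵐᵒᵖ M]
variable [IsScalarTower k A M] [IsScalarTower k Bᵐᵒᵖ M] [SMulCommClass A Bᵐᵒᵖ M]
variable (N : Type u) [AddCommGroup N] [Module k N] [Module B N] [Module Aᵐᵒᵖ N]
variable [IsScalarTower k B N] [IsScalarTower k Aᵐᵒᵖ N] [SMulCommClass B Aᵐᵒᵖ N]

/-- The pair of bimodules `(M, N)` defines a singular equivalence of Morita type with
level `l`: the four one-sided modules are finitely generated projective, and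
`M ⊗_B N ≅ Ω^l_{A^e}(A)`, `N ⊗_A M ≅ Ω^l_{B^e}(B)` in the stable categories of bimodules.
The tensor products are encoded via their universal property. -/
def SingularEquivalenceOfMoritaTypeWithLevel (l : ℕ) : Prop :=
  Module.Finite A M ∧ Module.Projective A M ∧
  Module.Finite Bᵐᵒᵖ M ∧ Module.Projective Bᵐᵒᵖ M ∧
  Module.Finite B N ∧ Module.Projective B N ∧
  Module.Finite Aᵐᵒᵖ N ∧ Module.Projective Aᵐᵒᵖ N ∧
  (∀ (T : Type u) [AddCommGroup T] [Module k T] [Module A T] [Module Aᵐᵒᵖ T]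
      [IsScalarTower k A T] [IsScalarTower k Aᵐᵒᵖ T] [SMulCommClass A Aᵐᵒᵖ T]
      (β : M → N → T), IsTensorProductOver B β →
      (∀ (a : A) (m : M) (n : N), β (a • m) n = a • β m n) →
      (∀ (a : Aᵐᵒᵖ) (m : M) (n : N), β m (a • n) = a • β m n) →
      (∀ (c : k) (m : M) (n : N), β (c • m) n = c • β m n) →
      StablyIsoNthSyzygy (A ⊗[k] Aᵐᵒᵖ) l (envModuleCat k A T) (envModuleCat k A A)) ∧
  (∀ (T : Type u) [AddCommGroup T] [Module k T] [Module B T] [Module Bᵐᵒᵖ T]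
      [IsScalarTower k B T] [IsScalarTower k Bᵐᵒᵖ T] [SMulCommClass B Bᵐᵒᵖ T]
      (β : N → M → T), IsTensorProductOver A β →
      (∀ (b : B) (n : N) (m : M), β (b • n) m = b • β n m) →
      (∀ (b : Bᵐᵒᵖ) (n : N) (m : M), β n (b • m) = b • β n m) →
      (∀ (c : k) (n : N) (m : M), β (c • n) m = c • β n m) →
      StablyIsoNthSyzygy (B ⊗[k] Bᵐᵒᵖ) l (envModuleCat k B T) (envModuleCat k B B))

end Statement

end ExtDim

/-!
If `M ⊗_B N` and `Ω^l(A)` are stably isomorphic as bimodules, then tensoring with `Z` shows that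
`M ⊗_B N ⊗_A Z` and `Ω^l(Z)` agree up to projective summands: the bimodule syzygies of `A` are
projective as right modules, so that a bimodule resolution of `A` stays exact when tensored with
`Z`. The functors `M ⊗_B -` and `N ⊗_A -` are exact and preserve finitely generated projectives,
hence preserve syzygies and layers of extensions. So if `N ⊗_A Z` lies in `[X]_{n+1}`, then
`Ω^l(Z)` lies in `[M ⊗_B X ⊕ A]_{n+1}`. As `Ω^{i+l}(A-mod)` consists of `l`-th syzygies of modules
in `Ω^i(A-mod)`, and similarly for `Ω^∞`, both dimensions of `A` are bounded by those of `B`.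
-/

namespace ExtDim

open MulOpposite
open scoped TensorProduct

section BalancedTensor

variable (R : Type*) [Ring R] (X : Type*) [AddCommGroup X] [Module Rᵐᵒᵖ X]
  (Y : Type*) [AddCommGroup Y] [Module R Y]

/-- The subgroup of `X ⊗[ℤ] Y` generated by the elements `x r ⊗ y - x ⊗ r y`. -/
def balancingRelations : Submodule ℤ (X ⊗[ℤ] Y) :=
  Submodule.span ℤ {t | ∃ (r : R) (x : X) (y : Y), t = (op r • x) ⊗ₜ y - x ⊗ₜ (r • y)}

/-- The tensor product of a right module and a left module over a noncommutative ring, for which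
Mathlib only has the commutative case; right `R`-modules are `Rᵐᵒᵖ`-modules. -/
def BalancedTensor : Type _ := (X ⊗[ℤ] Y) ⧸ balancingRelations R X Y

namespace BalancedTensor

noncomputable instance : AddCommGroup (BalancedTensor R X Y) :=
  inferInstanceAs (AddCommGroup ((X ⊗[ℤ] Y) ⧸ balancingRelations R X Y))

variable {X Y}

/-- The pure tensor `x ⊗ y`, as a biadditive map. -/
noncomputable def tmul : X →+ Y →+ BalancedTensor R X Y :=
  AddMonoidHom.mk'
    (fun x => ((balancingRelations R X Y).mkQ ∘ₗ TensorProduct.mk ℤ X Y x).toAddMonoidHom)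
    fun x₁ x₂ => by ext y; simp; rfl

variable {R}

lemma op_smul_tmul (r : R) (x : X) (y : Y) : tmul R (op r • x) y = tmul R x (r • y) :=
  (Submodule.Quotient.eq _).2 (Submodule.subset_span ⟨r, x, y, rfl⟩)

@[elab_as_elim, induction_eliminator]
lemma induction_on {p : BalancedTensor R X Y → Prop} (t : BalancedTensor R X Y)
    (tmul : ∀ x y, p (tmul R x y)) (add : ∀ a b, p a → p b → p (a + b)) : p t := by
  obtain ⟨t, rfl⟩ := Submodule.mkQ_surjective (balancingRelations R X Y) t
  induction t using TensorProduct.induction_on with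
  | zero => rw [← TensorProduct.zero_tmul X (0 : Y)]; exact tmul 0 0
  | tmul x y => exact tmul x y
  | add a b ha hb => rw [map_add]; exact add _ _ ha hb

@[ext]
lemma hom_ext {T : Type*} [AddCommGroup T] {f g : BalancedTensor R X Y →+ T}
    (h : ∀ x y, f (tmul R x y) = g (tmul R x y)) : f = g := by
  refine AddMonoidHom.ext fun t => ?_
  induction t with
  | tmul x y => exact h x y
  | add a b ha hb => rw [map_add, map_add, ha, hb]

/-- The homomorphism induced by a biadditive balanced map. -/
noncomputable def lift {T : Type*} [AddCommGroup T] (f : X →+ Y →+ T)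
    (hf : ∀ (r : R) x y, f (op r • x) y = f x (r • y)) : BalancedTensor R X Y →+ T :=
  ((balancingRelations R X Y).liftQ
    (TensorProduct.liftAddHom f fun n x y => by simp).toIntLinearMap
    (by
      refine Submodule.span_le.2 ?_
      rintro _ ⟨r, x, y, rfl⟩
      simp [hf])).toAddMonoidHom

@[simp]
lemma lift_tmul {T : Type*} [AddCommGroup T] (f : X →+ Y →+ T)
    (hf : ∀ (r : R) x y, f (op r • x) y = f x (r • y)) (x : X) (y : Y) :
    lift f hf (tmul R x y) = f x y :=
  rfl

lemma isTensorProductOver_tmul {R : Type u} [Ring R] {X Y : Type u} [AddCommGroup X]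
    [Module Rᵐᵒᵖ X] [AddCommGroup Y] [Module R Y] :
    IsTensorProductOver R fun (x : X) (y : Y) => tmul R x y := by
  refine ⟨⟨by simp, by simp, op_smul_tmul⟩, fun T _ β ⟨add_left, add_right, balanced⟩ => ?_⟩
  let f : X →+ Y →+ T := AddMonoidHom.mk' (fun x => AddMonoidHom.mk' (β x) (add_right x))
    fun x₁ x₂ => AddMonoidHom.ext (add_left x₁ x₂)
  exact ⟨lift f balanced, lift_tmul f balanced, fun φ hφ => hom_ext hφ⟩

variable {X' : Type*} [AddCommGroup X'] [Module Rᵐᵒᵖ X'] {Y' : Type*} [AddCommGroup Y']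
  [Module R Y']

/-- The homomorphism `f ⊗ g`. -/
noncomputable def map (f : X →ₗ[Rᵐᵒᵖ] X') (g : Y →ₗ[R] Y') :
    BalancedTensor R X Y →+ BalancedTensor R X' Y' :=
  lift (AddMonoidHom.mk' (fun x => (tmul R (f x)).comp g.toAddMonoidHom)
    fun x₁ x₂ => by ext y; simp) fun r x y => by simp [op_smul_tmul]

@[simp]
lemma map_tmul (f : X →ₗ[Rᵐᵒᵖ] X') (g : Y →ₗ[R] Y') (x : X) (y : Y) :
    map f g (tmul R x y) = tmul R (f x) (g y) :=
  rfl

lemma map_add_left (f f' : X →ₗ[Rᵐᵒᵖ] X') (g : Y →ₗ[R] Y') :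
    map (f + f') g = map f g + map f' g :=
  hom_ext fun x y => DFunLike.congr_fun (map_add (tmul R) (f x) (f' x)) (g y)

lemma map_comp_left {X'' : Type*} [AddCommGroup X''] [Module Rᵐᵒᵖ X''] (f : X' →ₗ[Rᵐᵒᵖ] X'')
    (f' : X →ₗ[Rᵐᵒᵖ] X') : map (Y := Y) (f ∘ₗ f') LinearMap.id =
      (map f LinearMap.id).comp (map f' LinearMap.id) :=
  hom_ext fun _ _ => rfl

lemma map_id : map LinearMap.id LinearMap.id = AddMonoidHom.id (BalancedTensor R X Y) :=
  hom_ext fun _ _ => rfl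

section Bimodules

/-- The action of the endomorphisms of `X` on `X ⊗ Y`. -/
noncomputable def endLeft : Module.End Rᵐᵒᵖ X →+* AddMonoid.End (BalancedTensor R X Y) where
  toFun f := map f LinearMap.id
  map_one' := map_id
  map_mul' := map_comp_left
  map_zero' := hom_ext fun _ y => DFunLike.congr_fun (map_zero (tmul R)) y
  map_add' f g := map_add_left f g LinearMap.id

/-- The action of the endomorphisms of `Y` on `X ⊗ Y`. -/
noncomputable def endRight : Module.End R Y →+* AddMonoid.End (BalancedTensor R X Y) where
  toFun g := map LinearMap.id g
  map_one' := map_id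
  map_mul' _ _ := hom_ext fun _ _ => rfl
  map_zero' := hom_ext fun x _ => map_zero (tmul R x)
  map_add' f g := hom_ext fun x y => map_add (tmul R x) (f y) (g y)

variable {S : Type*} [Ring S] [Module S X] [SMulCommClass S Rᵐᵒᵖ X]
  [Module S X'] [SMulCommClass S Rᵐᵒᵖ X']
  {S' : Type*} [Ring S'] [Module S'ᵐᵒᵖ Y] [SMulCommClass R S'ᵐᵒᵖ Y]

noncomputable instance leftModule : Module S (BalancedTensor R X Y) :=
  Module.compHom (BalancedTensor R X Y)
    ((endLeft (X := X) (Y := Y)).comp (Module.toModuleEnd (S := S) Rᵐᵒᵖ X))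

noncomputable instance rightModule : Module S'ᵐᵒᵖ (BalancedTensor R X Y) :=
  haveI := SMulCommClass.symm R S'ᵐᵒᵖ Y
  Module.compHom (BalancedTensor R X Y)
    ((endRight (X := X) (Y := Y)).comp (Module.toModuleEnd (S := S'ᵐᵒᵖ) R Y))

lemma smul_tmul (s : S) (x : X) (y : Y) : s • tmul R x y = tmul R (s • x) y :=
  rfl

lemma op_smul_tmul_right (s : S'ᵐᵒᵖ) (x : X) (y : Y) : s • tmul R x y = tmul R x (s • y) :=
  rfl

instance : SMulCommClass S S'ᵐᵒᵖ (BalancedTensor R X Y) where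
  smul_comm a b t := by
    induction t with
    | tmul x y => simp only [smul_tmul, op_smul_tmul_right]
    | add t₁ t₂ h₁ h₂ => simp only [smul_add, h₁, h₂]

instance {k : Type*} [CommRing k] [Algebra k S] [Module k X] [SMulCommClass k Rᵐᵒᵖ X]
    [IsScalarTower k S X] : IsScalarTower k S (BalancedTensor R X Y) where
  smul_assoc c a t := by
    induction t with
    | tmul x y => simp only [smul_tmul, smul_assoc]
    | add t₁ t₂ h₁ h₂ => simp only [smul_add, h₁, h₂]

instance {k : Type*} [CommRing k] [Algebra k R] [Module k X] [IsScalarTower k Rᵐᵒᵖ X]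
    [Module k Y] [IsScalarTower k R Y] [Algebra k S'] [IsScalarTower k S'ᵐᵒᵖ Y] :
    IsScalarTower k S'ᵐᵒᵖ (BalancedTensor R X Y) where
  smul_assoc c a t := by
    induction t with
    | tmul x y =>
      rw [op_smul_tmul_right, op_smul_tmul_right, smul_tmul, smul_assoc,
        ← algebraMap_smul R c, ← op_smul_tmul, ← MulOpposite.algebraMap_apply, algebraMap_smul]
    | add t₁ t₂ h₁ h₂ => simp only [smul_add, h₁, h₂]

variable {T : Type*} [AddCommGroup T] [Module S T]

@[ext]
lemma linearMap_ext {f g : BalancedTensor R X Y →ₗ[S] T}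
    (h : ∀ x y, f (tmul R x y) = g (tmul R x y)) : f = g :=
  LinearMap.toAddMonoidHom_injective (hom_ext h)

/-- The `S`-linear map induced by a balanced map which is biadditive and `S`-linear in the first
variable. -/
noncomputable def liftₗ (f : X →+ Y →+ T) (hf : ∀ (r : R) x y, f (op r • x) y = f x (r • y))
    (hS : ∀ (s : S) x y, f (s • x) y = s • f x y) : BalancedTensor R X Y →ₗ[S] T :=
  { lift f hf with
    map_smul' := fun s t => by
      induction t with
      | tmul x y => exact hS s x y
      | add t₁ t₂ h₁ h₂ => simp_all }

variable (S) in
/-- The `S`-linear map `f ⊗ g`, for a map `f` of bimodules. -/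
noncomputable def mapₗ (f : X →ₗ[Rᵐᵒᵖ] X') (hf : ∀ (s : S) x, f (s • x) = s • f x)
    (g : Y →ₗ[R] Y') : BalancedTensor R X Y →ₗ[S] BalancedTensor R X' Y' :=
  liftₗ (((tmul R).comp f.toAddMonoidHom).compl₂ g.toAddMonoidHom)
    (fun r x y => by simp [op_smul_tmul]) fun s x y => by simp [hf, smul_tmul]

variable (R X S) in
/-- The right unit isomorphism `x ⊗ r ↦ x r`. -/
noncomputable def rightUnitEquiv : BalancedTensor R X R ≃ₗ[S] X :=
  LinearEquiv.ofLinearMap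
    (liftₗ (AddMonoidHom.mk' (fun x => AddMonoidHom.mk' (fun r => op r • x)
        fun r₁ r₂ => by simp [add_smul]) fun x₁ x₂ => by ext; simp)
      (fun r x y => by simp [mul_smul]) fun s x r => (smul_comm s (op r) x).symm)
    { toFun := fun x => tmul R x 1
      map_add' := by simp
      map_smul' := fun _ _ => rfl }
    (LinearMap.ext fun x => one_smul Rᵐᵒᵖ x)
    (linearMap_ext fun x r => (op_smul_tmul r x 1).trans (congrArg (tmul R x) (mul_one r)))

variable (R Y) in
/-- The left unit isomorphism `r ⊗ y ↦ r y`. -/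
noncomputable def leftUnitEquiv : BalancedTensor R R Y ≃ₗ[R] Y :=
  LinearEquiv.ofLinearMap
    (liftₗ (smulAddHom R Y) (fun r x y => by simp [mul_smul]) fun s x y => by simp [mul_smul])
    { toFun := fun y => tmul R 1 y
      map_add' := by simp
      map_smul' := fun r y => by simp [smul_tmul, ← op_smul_tmul] }
    (LinearMap.ext fun y => one_smul R y)
    (linearMap_ext fun r y => (op_smul_tmul r 1 y).symm.trans (congrArg (tmul R · y) (one_mul r)))

variable {Q : Type*} [Ring Q] {Z : Type*} [AddCommGroup Z] [Module Q Z]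
  {N : Type*} [AddCommGroup N] [Module R N] [Module Qᵐᵒᵖ N] [SMulCommClass R Qᵐᵒᵖ N]

/-- The map `(x ⊗ n) ⊗ z ↦ x ⊗ (n ⊗ z)`. -/
noncomputable def assocHom : BalancedTensor Q (BalancedTensor R X N) Z →ₗ[S]
    BalancedTensor R X (BalancedTensor Q N Z) :=
  liftₗ
    (lift ((AddMonoidHom.compHom.comp (tmul R)).compl₂ (tmul Q)) fun r x n =>
      AddMonoidHom.ext fun z => op_smul_tmul r x (tmul Q n z))
    (fun q t z => by
      induction t with
      | tmul x n => simp [op_smul_tmul_right, op_smul_tmul]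
      | add t₁ t₂ h₁ h₂ => simp_all)
    fun s t z => by
      induction t with
      | tmul x n => simp [smul_tmul]
      | add t₁ t₂ h₁ h₂ => simp_all

/-- The map `x ⊗ (n ⊗ z) ↦ (x ⊗ n) ⊗ z`. -/
noncomputable def assocInv : BalancedTensor R X (BalancedTensor Q N Z) →ₗ[S]
    BalancedTensor Q (BalancedTensor R X N) Z :=
  liftₗ
    (AddMonoidHom.mk' (fun x => lift ((tmul Q).comp (tmul R x)) fun q n z =>
        op_smul_tmul q (tmul R x n) z)
      fun x₁ x₂ => hom_ext fun n z => by
        change tmul Q (tmul R (x₁ + x₂) n) z = tmul Q (tmul R x₁ n) z + tmul Q (tmul R x₂ n) z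
        simp only [map_add, AddMonoidHom.add_apply])
    (fun r x t => by
      induction t with
      | tmul n z => exact congrArg (fun t => tmul Q t z) (op_smul_tmul r x n)
      | add t₁ t₂ h₁ h₂ => simp_all)
    fun s x t => by
      induction t with
      | tmul n z => rfl
      | add t₁ t₂ h₁ h₂ => simp_all

variable (R X N Q Z S) in
/-- The associativity isomorphism `(x ⊗ n) ⊗ z ↦ x ⊗ (n ⊗ z)`. -/
noncomputable def assocEquiv : BalancedTensor Q (BalancedTensor R X N) Z ≃ₗ[S]
    BalancedTensor R X (BalancedTensor Q N Z) :=
  LinearEquiv.ofLinearMap assocHom assocInv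
    (linearMap_ext fun x t => by
      induction t with
      | tmul n z => rfl
      | add t₁ t₂ h₁ h₂ => simp_all)
    (linearMap_ext fun t z => by
      induction t with
      | tmul x n => rfl
      | add t₁ t₂ h₁ h₂ => simp_all)

end Bimodules

end BalancedTensor

end BalancedTensor

section Summands

variable {R : Type u} [Ring R] {X Y Z : Type*} [AddCommGroup X] [Module R X] [AddCommGroup Y]
  [Module R Y] [AddCommGroup Z] [Module R Z]

variable (R X Y) in
/-- `X` is isomorphic to a direct summand of `Y`. -/
def IsSummand : Prop :=
  ∃ (s : X →ₗ[R] Y) (r : Y →ₗ[R] X), r ∘ₗ s = LinearMap.id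

namespace IsSummand

lemma of_equiv (e : X ≃ₗ[R] Y) : IsSummand R X Y :=
  ⟨e, e.symm, e.symm_comp⟩

lemma trans (hXY : IsSummand R X Y) (hYZ : IsSummand R Y Z) : IsSummand R X Z := by
  obtain ⟨s, r, hrs⟩ := hXY
  obtain ⟨s', r', hrs'⟩ := hYZ
  refine ⟨s' ∘ₗ s, r ∘ₗ r', ?_⟩
  rw [LinearMap.comp_assoc, ← LinearMap.comp_assoc s, hrs', LinearMap.id_comp, hrs]

lemma prod_left : IsSummand R X (X × Y) :=
  ⟨LinearMap.inl R X Y, LinearMap.fst R X Y, LinearMap.fst_comp_inl R X Y⟩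

lemma prod_right : IsSummand R Y (X × Y) :=
  ⟨LinearMap.inr R X Y, LinearMap.snd R X Y, LinearMap.snd_comp_inr R X Y⟩

lemma prod {X' Y' : Type*} [AddCommGroup X'] [Module R X'] [AddCommGroup Y'] [Module R Y']
    (h : IsSummand R X Y) (h' : IsSummand R X' Y') : IsSummand R (X × X') (Y × Y') := by
  obtain ⟨s, r, hrs⟩ := h
  obtain ⟨s', r', hrs'⟩ := h'
  exact ⟨s.prodMap s', r.prodMap r', by
    rw [LinearMap.prodMap_comp, hrs, hrs', LinearMap.prodMap_id]⟩

lemma pi (ι : Type*) (h : IsSummand R X Y) : IsSummand R (ι → X) (ι → Y) := by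
  obtain ⟨s, r, hrs⟩ := h
  exact ⟨s.compLeft ι, r.compLeft ι, LinearMap.ext fun x => funext fun i =>
    LinearMap.congr_fun hrs (x i)⟩

lemma finite [Module.Finite R Y] (h : IsSummand R X Y) : Module.Finite R X := by
  obtain ⟨s, r, hrs⟩ := h
  exact Module.Finite.of_surjective r fun x => ⟨s x, LinearMap.congr_fun hrs x⟩

lemma projective [Module.Projective R Y] (h : IsSummand R X Y) : Module.Projective R X := by
  obtain ⟨s, r, hrs⟩ := h
  exact Module.Projective.of_split s r hrs

lemma exists_prod_equiv {Y : Type w} [AddCommGroup Y] [Module R Y] (h : IsSummand R X Y) :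
    ∃ X' : ModuleCat.{w} R, Nonempty ((X × X') ≃ₗ[R] Y) := by
  obtain ⟨s, r, hrs⟩ := h
  have hrs (x : X) : r (s x) = x := LinearMap.congr_fun hrs x
  have hker (y : Y) : (LinearMap.id - s ∘ₗ r : Y →ₗ[R] Y) y ∈ LinearMap.ker r := by simp [hrs]
  exact ⟨ModuleCat.of R (LinearMap.ker r), ⟨LinearEquiv.ofLinearMap
    (s.coprod (LinearMap.ker r).subtype) (r.prod ((LinearMap.id - s ∘ₗ r).codRestrict _ hker))
    (LinearMap.ext fun y => by simp)
    (LinearMap.ext fun ⟨x, z, hz⟩ => by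
      rw [LinearMap.mem_ker] at hz
      exact Prod.ext (by simp [hrs, hz]) (Subtype.ext (by simp [hrs, hz])))⟩⟩

end IsSummand

lemma exists_isSummand_pi_of_finite_of_projective (P : Type*) [AddCommGroup P] [Module R P]
    [Module.Finite R P] [Module.Projective R P] : ∃ n : ℕ, IsSummand R P (Fin n → R) := by
  obtain ⟨n, r, s, -, -, hrs⟩ := Module.Finite.exists_comp_eq_id_of_projective R P
  exact ⟨n, s, r, hrs⟩

variable (R X Y) in
/-- `X` is a direct summand of `Y ⊕ P` for some projective module `P`, that is, a retract of `Y` in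
the stable category. -/
def IsStableSummand : Prop :=
  ∃ P : ModuleCat.{u} R, Module.Projective R P ∧ IsSummand R X (Y × P)

lemma IsSummand.isStableSummand (h : IsSummand R X Y) : IsStableSummand R X Y :=
  ⟨ModuleCat.of R R, inferInstanceAs (Module.Projective R R), h.trans prod_left⟩

namespace IsStableSummand

lemma trans (hXY : IsStableSummand R X Y) (hYZ : IsStableSummand R Y Z) :
    IsStableSummand R X Z := by
  obtain ⟨P, _, hP⟩ := hXY
  obtain ⟨Q, _, hQ⟩ := hYZ
  refine ⟨ModuleCat.of R (Q × P), inferInstanceAs (Module.Projective R (Q × P)), ?_⟩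
  exact hP.trans ((hQ.prod (.of_equiv (.refl R P))).trans (.of_equiv (.prodAssoc R Z Q P)))

lemma exists_isSummand_prod_pi [Module.Finite R X] (h : IsStableSummand R X Y) :
    ∃ n : ℕ, IsSummand R X (Y × (Fin n → R)) := by
  obtain ⟨P, _, s, r, hrs⟩ := h
  obtain ⟨n, q, hq⟩ := Module.Finite.exists_fin' R X
  obtain ⟨t, ht⟩ := Module.projective_lifting_property q (r ∘ₗ LinearMap.inr R Y P) hq
  refine ⟨n, LinearMap.prodMap LinearMap.id t ∘ₗ s, (r ∘ₗ LinearMap.inl R Y P).coprod q, ?_⟩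
  ext x
  have hqt (p : P) : q (t p) = r (0, p) := LinearMap.congr_fun ht p
  have hx : r (s x) = x := LinearMap.congr_fun hrs x
  simp [hqt, ← map_add, hx]

end IsStableSummand

lemma StablyIsomorphic.symm {Z W : ModuleCat.{u} R} (h : StablyIsomorphic R Z W) :
    StablyIsomorphic R W Z := by
  obtain ⟨P, Q, hP, hP', hQ, hQ', ⟨e⟩⟩ := h
  exact ⟨Q, P, hQ, hQ', hP, hP', ⟨e.symm⟩⟩

end Summands

section ShortExact

variable {R : Type u} [Ring R] {X Y Z : ModuleCat.{u} R} {f : X →ₗ[R] Y} {g : Y →ₗ[R] Z}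

namespace SES

lemma comp_eq_zero (h : SES R f g) : g ∘ₗ f = 0 :=
  LinearMap.range_le_ker_iff.1 h.2.2.le

lemma exists_comp_eq (h : SES R f g) {W : Type*} [AddCommGroup W] [Module R W] (u : W →ₗ[R] Y)
    (hu : g ∘ₗ u = 0) : ∃ v : W →ₗ[R] X, f ∘ₗ v = u := by
  have mem_range (w : W) : u w ∈ LinearMap.range f := by
    rw [h.2.2]; exact LinearMap.congr_fun hu w
  refine ⟨(LinearEquiv.ofInjective f h.1).symm ∘ₗ u.codRestrict _ mem_range,
    LinearMap.ext fun w => ?_⟩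
  exact congrArg Subtype.val
    ((LinearEquiv.ofInjective f h.1).apply_symm_apply (u.codRestrict _ mem_range w))

lemma of_splitting {r : Y →+ X} {s : Z →+ Y} (hrf : ∀ x, r (f x) = x) (hgs : ∀ z, g (s z) = z)
    (hgf : g ∘ₗ f = 0) (hfr : ∀ y, f (r y) + s (g y) = y) : SES R f g := by
  refine ⟨Function.LeftInverse.injective hrf, Function.RightInverse.surjective hgs,
    le_antisymm (LinearMap.range_le_ker_iff.2 hgf) fun y hy => ⟨r y, ?_⟩⟩
  rw [LinearMap.mem_ker] at hy
  simpa [hy] using hfr y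

lemma prodMap_left (h : SES R f g) (W : ModuleCat.{u} R) :
    SES R (X := .of R (X × W)) (Y := .of R (Y × W)) (f.prodMap LinearMap.id)
      (g ∘ₗ LinearMap.fst R Y W) := by
  refine ⟨h.1.prodMap Function.injective_id, h.2.1.comp Prod.fst_surjective, ?_⟩
  rw [LinearMap.ker_comp, ← h.2.2]
  ext ⟨y, w⟩
  simp

lemma prodMap_right (h : SES R f g) (W : ModuleCat.{u} R) :
    SES R (Y := .of R (Y × W)) (Z := .of R (Z × W)) (LinearMap.inl R Y W ∘ₗ f)
      (g.prodMap LinearMap.id) := by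
  refine ⟨LinearMap.inl_injective.comp h.1, h.2.1.prodMap Function.surjective_id, ?_⟩
  rw [LinearMap.range_comp, h.2.2, LinearMap.ker_prodMap, LinearMap.ker_id]
  exact Submodule.map_inl _

end SES

/-- A comparison of projective presentations, generalizing Schanuel's lemma from isomorphic
modules to a summand. -/
lemma IsSummand.of_ses {Z K P W K' P' : ModuleCat.{u} R} [Module.Projective R P]
    [Module.Projective R P'] {f : K →ₗ[R] P} {g : P →ₗ[R] Z} {f' : K' →ₗ[R] P'}
    {g' : P' →ₗ[R] W} (h : IsSummand R Z W) (hfg : SES R f g) (hfg' : SES R f' g') :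
    IsSummand R K (K' × P) := by
  obtain ⟨s, r, hrs⟩ := h
  obtain ⟨a, ha⟩ := Module.projective_lifting_property g' (s ∘ₗ g) hfg'.2.1
  obtain ⟨b, hb⟩ := Module.projective_lifting_property g (r ∘ₗ g') hfg.2.1
  obtain ⟨α, hα⟩ := hfg'.exists_comp_eq (a ∘ₗ f) (by
    rw [← LinearMap.comp_assoc, ha, LinearMap.comp_assoc, hfg.comp_eq_zero, LinearMap.comp_zero])
  obtain ⟨β, hβ⟩ := hfg.exists_comp_eq (b ∘ₗ f') (by
    rw [← LinearMap.comp_assoc, hb, LinearMap.comp_assoc, hfg'.comp_eq_zero, LinearMap.comp_zero])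
  obtain ⟨η, hη⟩ := hfg.exists_comp_eq (LinearMap.id - b ∘ₗ a) (by
    rw [LinearMap.comp_sub, ← LinearMap.comp_assoc, hb, LinearMap.comp_assoc, ha,
      ← LinearMap.comp_assoc, hrs, LinearMap.comp_id, LinearMap.id_comp, sub_self])
  refine ⟨α.prod f, β.coprod η, LinearMap.ext fun x => hfg.1 ?_⟩
  have hβα : f (β (α x)) = b (a (f x)) :=
    (LinearMap.congr_fun hβ _).trans (congrArg b (LinearMap.congr_fun hα x))
  have hηf : f (η (f x)) = f x - b (a (f x)) := LinearMap.congr_fun hη (f x)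
  simp [hβα, hηf]

lemma IsStableSummand.of_ses {Z K P W K' P' : ModuleCat.{u} R} [Module.Projective R P]
    [Module.Projective R P'] {f : K →ₗ[R] P} {g : P →ₗ[R] Z} {f' : K' →ₗ[R] P'}
    {g' : P' →ₗ[R] W} (h : IsStableSummand R Z W) (hfg : SES R f g) (hfg' : SES R f' g') :
    IsStableSummand R K K' := by
  obtain ⟨Q, _, hQ⟩ := h
  have : Module.Projective R (ModuleCat.of R (P' × Q)) :=
    inferInstanceAs (Module.Projective R (P' × Q))
  exact ⟨P, ‹_›, IsSummand.of_ses (W := .of R (W × Q)) hQ hfg (hfg'.prodMap_right Q)⟩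

end ShortExact

section Brackets

variable {R : Type u} [Ring R] {M M' X Y : ModuleCat.{u} R}

lemma MemAdd.exists_isSummand_pi (h : MemAdd R M X) : ∃ n : ℕ, IsSummand R X (Fin n → M) := by
  obtain ⟨n, X', ⟨e⟩⟩ := h
  exact ⟨n, IsSummand.prod_left.trans (.of_equiv e)⟩

lemma MemAdd.of_isSummand_pi {ι : Type*} [Finite ι] (h : IsSummand R X (ι → M)) :
    MemAdd R M X := by
  obtain ⟨X', e⟩ := (h.trans
    (.of_equiv (LinearEquiv.funCongrLeft R M (Finite.equivFin ι).symm))).exists_prod_equiv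
  exact ⟨Nat.card ι, X', e⟩

namespace MemAdd

lemma of_isSummand (h : IsSummand R X M) : MemAdd R M X :=
  of_isSummand_pi (ι := Unit) (h.trans (.of_equiv (LinearEquiv.funUnique Unit R M).symm))

lemma trans (hX : MemAdd R M X) (hM : MemAdd R M' M) : MemAdd R M' X := by
  obtain ⟨n, hn⟩ := hX.exists_isSummand_pi
  obtain ⟨m, hm⟩ := hM.exists_isSummand_pi
  exact of_isSummand_pi (ι := Fin n × Fin m)
    (hn.trans ((hm.pi _).trans (.of_equiv (LinearEquiv.curry R M' (Fin n) (Fin m)).symm)))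

lemma prod (hX : MemAdd R M X) (hY : MemAdd R M Y) : MemAdd R M (.of R (X × Y)) := by
  obtain ⟨n, hn⟩ := hX.exists_isSummand_pi
  obtain ⟨m, hm⟩ := hY.exists_isSummand_pi
  exact of_isSummand_pi (ι := Fin n ⊕ Fin m)
    ((hn.prod hm).trans (.of_equiv (LinearEquiv.sumArrowLequivProdArrow (Fin n) (Fin m) R M).symm))

end MemAdd

lemma mem_bullet_iff {C₁ C₂ : Set (ModuleCat.{u} R)} : X ∈ Bullet R C₁ C₂ ↔
    ∃ (M₁ M₂ E : ModuleCat.{u} R) (f : M₁ →ₗ[R] E) (g : E →ₗ[R] M₂),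
      M₁ ∈ C₁ ∧ M₂ ∈ C₂ ∧ SES R f g ∧ IsSummand R X E := by
  constructor
  · rintro ⟨X', M₁, M₂, h₁, h₂, f, g, hfg⟩
    exact ⟨M₁, M₂, .of R (X × X'), f, g, h₁, h₂, hfg, IsSummand.prod_left⟩
  · rintro ⟨M₁, M₂, E, f, g, h₁, h₂, ⟨hf, hg, hfg⟩, hX⟩
    obtain ⟨X', ⟨e⟩⟩ := hX.exists_prod_equiv
    refine ⟨X', M₁, M₂, h₁, h₂, e.symm.toLinearMap ∘ₗ f, g ∘ₗ e.toLinearMap,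
      e.symm.injective.comp hf, hg.comp e.surjective, ?_⟩
    rw [LinearMap.range_comp, hfg, LinearMap.ker_comp]
    exact (LinearMap.ker g).map_equiv_eq_comap_symm e.symm

lemma bracket_mono (h : MemAdd R M' M) : ∀ n : ℕ, bracket R M n ⊆ bracket R M' n
  | 0 => subset_rfl
  | n + 1 => fun _ ⟨X', M₁, M₂, h₁, h₂, hfg⟩ => ⟨X', M₁, M₂, h₁.trans h, bracket_mono h n h₂, hfg⟩

lemma IsStableSummand.mem_bracket [Module.Finite R X] {n : ℕ} (h : IsStableSummand R X Y)
    (hY : Y ∈ bracket R M (n + 1)) : X ∈ bracket R (.of R (M × R)) (n + 1) := by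
  obtain ⟨m, hm⟩ := h.exists_isSummand_prod_pi
  obtain ⟨M₁, M₂, E, f, g, h₁, h₂, hfg, hE⟩ := mem_bullet_iff.1 hY
  have hM : MemAdd R (.of R (M × R)) M := .of_isSummand IsSummand.prod_left
  have hR : MemAdd R (.of R (M × R)) (.of R R) := .of_isSummand IsSummand.prod_right
  have hRm : MemAdd R (.of R R) (.of R (Fin m → R)) := .of_isSummand_pi (.of_equiv (.refl R _))
  exact mem_bullet_iff.2 ⟨.of R (M₁ × (Fin m → R)), M₂, .of R (E × (Fin m → R)), _, _,
    (MemAdd.trans h₁ hM).prod (hRm.trans hR), bracket_mono hM n h₂,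
    hfg.prodMap_left (.of R (Fin m → R)), hm.trans (hE.prod (.of_equiv (.refl R _)))⟩

end Brackets

section ExactFunctors

variable {R S : Type u} [Ring R] [Ring S]

/-- Exactness of a functor, in terms of the short exact sequences `SES`. -/
def PreservesSES (F : ModuleCat.{u} R ⥤ ModuleCat.{u} S) : Prop :=
  ∀ ⦃X Y Z : ModuleCat.{u} R⦄ (f : X →ₗ[R] Y) (g : Y →ₗ[R] Z), SES R f g →
    SES S (F.map (ModuleCat.ofHom f)).hom (F.map (ModuleCat.ofHom g)).hom

variable {F : ModuleCat.{u} R ⥤ ModuleCat.{u} S} {X Y : ModuleCat.{u} R}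

variable (F) in
lemma IsSummand.map (h : IsSummand R X Y) : IsSummand S (F.obj X) (F.obj Y) := by
  obtain ⟨s, r, hrs⟩ := h
  refine ⟨(F.map (ModuleCat.ofHom s)).hom, (F.map (ModuleCat.ofHom r)).hom, ?_⟩
  rw [← ModuleCat.hom_comp, ← F.map_comp, ← ModuleCat.ofHom_comp, hrs]
  exact congrArg ModuleCat.Hom.hom (F.map_id X)

section Additive

variable [F.Additive]

variable (F Y) in
lemma isSummand_obj_pi (ι : Type u) [Finite ι] :
    IsSummand S (F.obj (.of R (ι → Y))) (ι → F.obj Y) := by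
  classical
  have := Fintype.ofFinite ι
  let p (i : ι) : ModuleCat.of R (ι → Y) ⟶ Y := ModuleCat.ofHom (LinearMap.proj i)
  let j (i : ι) : Y ⟶ ModuleCat.of R (ι → Y) := ModuleCat.ofHom (LinearMap.single R (fun _ => Y) i)
  have sum_p_j : ∑ i, p i ≫ j i = 𝟙 _ := by
    refine ModuleCat.hom_ext (LinearMap.ext fun y => ?_)
    simpa [p, j, ModuleCat.hom_sum] using Finset.univ_sum_single y
  refine ⟨LinearMap.pi fun i => (F.map (p i)).hom,
    ∑ i, (F.map (j i)).hom ∘ₗ LinearMap.proj i, ?_⟩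
  have := congrArg ModuleCat.Hom.hom (congrArg F.map sum_p_j)
  rw [F.map_sum, F.map_id] at this
  simpa [LinearMap.ext_iff, ModuleCat.hom_sum] using this

lemma MemAdd.map {M : ModuleCat.{u} R} (h : MemAdd R M X) : MemAdd S (F.obj M) (F.obj X) := by
  obtain ⟨n, hn⟩ := h.exists_isSummand_pi
  have hX : IsSummand R X (ULift.{u} (Fin n) → M) :=
    hn.trans (.of_equiv (LinearEquiv.funCongrLeft R M Equiv.ulift))
  exact .of_isSummand_pi ((IsSummand.map F hX (Y := .of R _)).trans (isSummand_obj_pi F M _))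

lemma projective_obj [Module.Projective S (F.obj (.of R R))] [Module.Finite R X]
    [Module.Projective R X] : Module.Projective S (F.obj X) := by
  obtain ⟨n, hn⟩ := exists_isSummand_pi_of_finite_of_projective (R := R) X
  obtain ⟨m, hm⟩ := (MemAdd.map (F := F) (M := .of R R) (.of_isSummand_pi hn)).exists_isSummand_pi
  have : Module.Projective S (Fin m → F.obj (.of R R)) :=
    .of_equiv (DirectSum.linearEquivFunOnFintype S (Fin m) fun _ => F.obj (.of R R))
  exact hm.projective

end Additive

namespace PreservesSES

variable (hF : PreservesSES F)
include hF

lemma surjective_map {f : X →ₗ[R] Y} (hf : Function.Surjective f) :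
    Function.Surjective (F.map (ModuleCat.ofHom f)).hom :=
  (hF (X := .of R (LinearMap.ker f)) (LinearMap.ker f).subtype f
    ⟨(LinearMap.ker f).injective_subtype, hf, (LinearMap.ker f).range_subtype⟩).2.1

variable [F.Additive]

lemma finite_obj [Module.Finite S (F.obj (.of R R))] [Module.Finite R X] :
    Module.Finite S (F.obj X) := by
  obtain ⟨n, q, hq⟩ := Module.Finite.exists_fin' R X
  have hn : MemAdd R (.of R R) (.of R (Fin n → R)) := .of_isSummand_pi (.of_equiv (.refl R _))
  obtain ⟨m, hm⟩ := (hn.map (F := F)).exists_isSummand_pi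
  have := hm.finite
  exact Module.Finite.of_surjective _ (hF.surjective_map (X := .of R _) hq)

lemma obj_mem_bracket {M : ModuleCat.{u} R} {n : ℕ} (hX : X ∈ bracket R M n) :
    F.obj X ∈ bracket S (F.obj M) n := by
  induction n generalizing X with
  | zero =>
    have : Subsingleton X := hX
    exact ModuleCat.subsingleton_of_isZero (F.map_isZero (ModuleCat.isZero_of_subsingleton X))
  | succ n ih =>
    obtain ⟨M₁, M₂, E, f, g, h₁, h₂, hfg, hE⟩ := mem_bullet_iff.1 hX
    exact mem_bullet_iff.2 ⟨_, _, _, _, _, MemAdd.map h₁, ih h₂, hF f g hfg, hE.map F⟩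

variable [Module.Finite S (F.obj (.of R R))]

lemma obj_mem_syzygyCat [Module.Projective S (F.obj (.of R R))] {n : ℕ} (hX : X ∈ syzygyCat R n) :
    F.obj X ∈ syzygyCat S n := by
  induction n generalizing X with
  | zero =>
    have : Module.Finite R X := hX
    exact hF.finite_obj
  | succ n ih =>
    obtain ⟨_, P, K, _, _, hK, f, g, hfg⟩ := hX
    exact ⟨hF.finite_obj, F.obj P, F.obj K, hF.finite_obj, projective_obj, ih hK, _, _, hF f g hfg⟩

lemma obj_mem_infSyzygyCat [Module.Projective S (F.obj (.of R R))] (hX : X ∈ infSyzygyCat R) :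
    F.obj X ∈ infSyzygyCat S := by
  obtain ⟨_, K, P, ⟨e⟩, h⟩ := hX
  refine ⟨hF.finite_obj, fun i => F.obj (K i), fun i => F.obj (P i),
    ⟨(F.mapIso e.toModuleIso).toLinearEquiv⟩, fun i => ?_⟩
  obtain ⟨_, _, f, g, hfg⟩ := h i
  exact ⟨hF.finite_obj, projective_obj, _, _, hF f g hfg⟩

lemma extDimCat_le {𝒜 : Set (ModuleCat.{u} S)} {ℬ : Set (ModuleCat.{u} R)}
    (h𝒜 : 𝒜 ⊆ fgModules S) (h : ∀ X ∈ 𝒜, ∃ Y ∈ ℬ, IsStableSummand S X (F.obj Y)) :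
    extDimCat S 𝒜 ≤ extDimCat R ℬ := by
  refine le_sInf ?_
  rintro _ ⟨n, rfl, M, _, hM⟩
  have : Module.Finite S (F.obj M) := hF.finite_obj
  refine sInf_le ⟨n, rfl, .of S (F.obj M × S),
    inferInstanceAs (Module.Finite S (F.obj M × S)), fun X hX => ?_⟩
  obtain ⟨Y, hY, hXY⟩ := h X hX
  have : Module.Finite S X := h𝒜 hX
  exact hXY.mem_bracket (hF.obj_mem_bracket (hM Y hY))

end PreservesSES

end ExactFunctors

section TensorFunctor

variable (R S : Type u) [Ring R] [Ring S] (W : Type u) [AddCommGroup W] [Module S W]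
  [Module Rᵐᵒᵖ W] [SMulCommClass S Rᵐᵒᵖ W]

open BalancedTensor

/-- The functor `W ⊗_R -` given by an `S`-`R`-bimodule `W`. -/
noncomputable def tensorFunctor : ModuleCat.{u} R ⥤ ModuleCat.{u} S where
  obj X := .of S (BalancedTensor R W X)
  map f := ModuleCat.ofHom (mapₗ S LinearMap.id (fun _ _ => rfl) f.hom)
  map_id _ := ModuleCat.hom_ext (linearMap_ext fun _ _ => rfl)
  map_comp _ _ := ModuleCat.hom_ext (linearMap_ext fun _ _ => rfl)

namespace tensorFunctor

instance : (tensorFunctor R S W).Additive where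
  map_add {_ _ f g} := ModuleCat.hom_ext (linearMap_ext fun w x => map_add (tmul R w) (f x) (g x))

instance [Module.Finite S W] : Module.Finite S ((tensorFunctor R S W).obj (.of R R)) :=
  .equiv (rightUnitEquiv R W S).symm

instance [Module.Projective S W] : Module.Projective S ((tensorFunctor R S W).obj (.of R R)) :=
  .of_equiv (rightUnitEquiv R W S).symm

end tensorFunctor

end TensorFunctor

section TensorExact

open BalancedTensor

lemma SES.finsupp {R : Type u} [Ring R] (ι : Type u) {X Y Z : ModuleCat.{u} R} {f : X →ₗ[R] Y}
    {g : Y →ₗ[R] Z} (h : SES R f g) :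
    SES R (X := .of R (ι →₀ X)) (Y := .of R (ι →₀ Y)) (Z := .of R (ι →₀ Z))
      (Finsupp.mapRange.linearMap f) (Finsupp.mapRange.linearMap g) := by
  refine ⟨Finsupp.mapRange_injective f f.map_zero h.1,
    Finsupp.mapRange_surjective g g.map_zero h.2.1, ?_⟩
  rw [Finsupp.range_mapRange_linearMap f (LinearMap.ker_eq_bot.2 h.1), Finsupp.ker_mapRange, h.2.2]

lemma SES.of_retract {R S : Type u} [Ring R] [Ring S] {X Y Z : ModuleCat.{u} R}
    {X' Y' Z' : ModuleCat.{u} S}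
    {f : X →ₗ[R] Y} {g : Y →ₗ[R] Z} {f' : X' →ₗ[S] Y'} {g' : Y' →ₗ[S] Z'} (h : SES R f g)
    {sX : X' →+ X} {rX : X →+ X'} {sY : Y' →+ Y} {rY : Y →+ Y'} {sZ : Z' →+ Z} {rZ : Z →+ Z'}
    (hX : ∀ x, rX (sX x) = x) (hY : ∀ y, rY (sY y) = y) (hZ : ∀ z, rZ (sZ z) = z)
    (hsf : ∀ x, sY (f' x) = f (sX x)) (hsg : ∀ y, sZ (g' y) = g (sY y))
    (hrf : ∀ x, rY (f x) = f' (rX x)) (hrg : ∀ y, rZ (g y) = g' (rY y)) : SES S f' g' := by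
  have hgf (x : X) : g (f x) = 0 := LinearMap.congr_fun h.comp_eq_zero x
  refine ⟨fun x₁ x₂ hx => ?_, fun z => ?_, le_antisymm ?_ fun y hy => ?_⟩
  · exact Function.LeftInverse.injective hX (h.1 (by rw [← hsf, ← hsf, hx]))
  · obtain ⟨y, hy⟩ := h.2.1 (sZ z)
    exact ⟨rY y, by rw [← hrg, hy, hZ]⟩
  · rintro _ ⟨x, rfl⟩
    rw [LinearMap.mem_ker, ← hZ (g' (f' x)), hsg, hsf, hgf, map_zero]
  · have hsy : sY y ∈ LinearMap.ker g := by
      rw [LinearMap.mem_ker, ← hsg, LinearMap.mem_ker.1 hy, map_zero]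
    rw [← h.2.2] at hsy
    obtain ⟨x, hx⟩ := hsy
    exact ⟨rX x, by rw [← hrf, hx, hY]⟩

section FinsuppRetract

variable {R : Type*} [Ring R] {W : Type*} [AddCommGroup W] [Module Rᵐᵒᵖ W] {X Y : Type*}
  [AddCommGroup X] [Module R X] [AddCommGroup Y] [Module R Y]

/-- The map `w ⊗ x ↦ (cᵢ(w) x)ᵢ` given by coordinates `c` of `W`, with values in the finitely
supported families in `X`. -/
noncomputable def BalancedTensor.toFinsupp {ι : Type*} (c : W →ₗ[Rᵐᵒᵖ] ι →₀ Rᵐᵒᵖ) :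
    BalancedTensor R W X →+ (ι →₀ X) :=
  lift (AddMonoidHom.mk' (fun w => AddMonoidHom.mk'
      (fun x => (c w).mapRange (fun a => a.unop • x) (zero_smul R x))
      fun x₁ x₂ => by ext; simp) fun w₁ w₂ => by ext; simp [add_smul])
    fun r w x => by ext; simp [mul_smul]

lemma BalancedTensor.toFinsupp_tmul {ι : Type*} (c : W →ₗ[Rᵐᵒᵖ] ι →₀ Rᵐᵒᵖ) (w : W) (x : X) :
    toFinsupp c (tmul R w x) = (c w).mapRange (fun a => a.unop • x) (zero_smul R x) :=
  rfl

lemma BalancedTensor.toFinsupp_map {ι : Type*} (c : W →ₗ[Rᵐᵒᵖ] ι →₀ Rᵐᵒᵖ) (f : X →ₗ[R] Y)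
    (t : BalancedTensor R W X) :
    toFinsupp c (map LinearMap.id f t) = Finsupp.mapRange.linearMap f (toFinsupp c t) := by
  induction t with
  | tmul w x => ext i; simp [toFinsupp_tmul]
  | add t₁ t₂ h₁ h₂ => simp only [map_add, h₁, h₂]

lemma BalancedTensor.liftAddHom_tmul_toFinsupp {c : W →ₗ[Rᵐᵒᵖ] W →₀ Rᵐᵒᵖ}
    (hc : Finsupp.linearCombination Rᵐᵒᵖ id ∘ₗ c = LinearMap.id) (t : BalancedTensor R W X) :
    Finsupp.liftAddHom (tmul R) (toFinsupp c t) = t := by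
  induction t with
  | tmul w x =>
    calc Finsupp.liftAddHom (tmul R) (toFinsupp c (tmul R w x))
        = (c w).sum fun v a => tmul R v (a.unop • x) :=
          Finsupp.sum_mapRange_index (hf := zero_smul R x) (by simp)
      _ = (c w).sum fun v a => tmul R (a • v) x := by simp only [← op_smul_tmul, op_unop]
      _ = tmul R ((c w).sum fun v a => a • v) x := by simp [Finsupp.sum]
      _ = tmul R w x := congrArg (tmul R · x) (LinearMap.congr_fun hc w)
  | add t₁ t₂ h₁ h₂ => rw [map_add, map_add, h₁, h₂]

lemma BalancedTensor.liftAddHom_tmul_mapRange (f : X →ₗ[R] Y) (p : W →₀ X) :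
    Finsupp.liftAddHom (tmul R) (Finsupp.mapRange.linearMap f p) =
      map LinearMap.id f (Finsupp.liftAddHom (tmul R) p) := by
  induction p using Finsupp.induction_linear with
  | zero => simp
  | add p q hp hq => simp only [map_add, hp, hq]
  | single w x => simp

end FinsuppRetract

variable (R S : Type u) [Ring R] [Ring S] (W : Type u) [AddCommGroup W] [Module S W]
  [Module Rᵐᵒᵖ W] [SMulCommClass S Rᵐᵒᵖ W]

lemma tensorFunctor.preservesSES [Module.Projective Rᵐᵒᵖ W] :
    PreservesSES (tensorFunctor R S W) := by
  obtain ⟨c, hc⟩ := Module.projective_def'.1 ‹Module.Projective Rᵐᵒᵖ W›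
  intro X Y Z f g hfg
  exact (hfg.finsupp W).of_retract
    (liftAddHom_tmul_toFinsupp hc) (liftAddHom_tmul_toFinsupp hc) (liftAddHom_tmul_toFinsupp hc)
    (toFinsupp_map c f) (toFinsupp_map c g)
    (liftAddHom_tmul_mapRange f) (liftAddHom_tmul_mapRange g)

end TensorExact

section Splitting

variable {R : Type u} [Ring R] {X Y Z : ModuleCat.{u} R} {f : X →ₗ[R] Y} {g : Y →ₗ[R] Z}

lemma SES.exists_splitting [Module.Projective R Z] (h : SES R f g) :
    ∃ (r : Y →ₗ[R] X) (s : Z →ₗ[R] Y), r ∘ₗ f = LinearMap.id ∧ g ∘ₗ s = LinearMap.id ∧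
      f ∘ₗ r + s ∘ₗ g = LinearMap.id := by
  obtain ⟨s, hs⟩ := Module.projective_lifting_property g LinearMap.id h.2.1
  obtain ⟨r, hr⟩ := h.exists_comp_eq (LinearMap.id - s ∘ₗ g) (by
    rw [LinearMap.comp_sub, ← LinearMap.comp_assoc, hs, LinearMap.comp_id, LinearMap.id_comp,
      sub_self])
  refine ⟨r, s, LinearMap.ext fun x => h.1 ?_, hs, by rw [hr, sub_add_cancel]⟩
  have hgf : g (f x) = 0 := LinearMap.congr_fun h.comp_eq_zero x
  simpa [hgf] using LinearMap.congr_fun hr (f x)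

lemma SES.projective_left [Module.Projective R Y] [Module.Projective R Z] (h : SES R f g) :
    Module.Projective R X := by
  obtain ⟨r, s, hrf, -, -⟩ := h.exists_splitting
  exact Module.Projective.of_split f r hrf

end Splitting

section EnvelopingAlgebra

open BalancedTensor

variable {k : Type u} [CommRing k] {A : Type u} [Ring A] [Algebra k A]

namespace EnvelopingModule

variable (W W' : ModuleCat.{u} (A ⊗[k] Aᵐᵒᵖ))

scoped instance : Module A W :=
  Module.compHom W (Algebra.TensorProduct.includeLeft : A →ₐ[k] A ⊗[k] Aᵐᵒᵖ).toRingHom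

scoped instance : Module Aᵐᵒᵖ W :=
  Module.compHom W (Algebra.TensorProduct.includeRight : Aᵐᵒᵖ →ₐ[k] A ⊗[k] Aᵐᵒᵖ).toRingHom

variable {W}

lemma smul_def (a : A) (w : W) : a • w = (a ⊗ₜ[k] (1 : Aᵐᵒᵖ)) • w := rfl

lemma op_smul_def (a : Aᵐᵒᵖ) (w : W) : a • w = ((1 : A) ⊗ₜ[k] a) • w := rfl

variable (W)

scoped instance : SMulCommClass A Aᵐᵒᵖ W where
  smul_comm a b w := by simp [smul_def, op_smul_def, smul_smul]

scoped instance : LinearMap.CompatibleSMul W W' A (A ⊗[k] Aᵐᵒᵖ) where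
  map_smul f a w := f.map_smul (a ⊗ₜ 1) w

scoped instance : LinearMap.CompatibleSMul W W' Aᵐᵒᵖ (A ⊗[k] Aᵐᵒᵖ) where
  map_smul f a w := f.map_smul (1 ⊗ₜ a) w

section EnvModuleCat

variable (T : Type u) [AddCommGroup T] [Module k T] [Module A T] [Module Aᵐᵒᵖ T]
  [IsScalarTower k A T] [IsScalarTower k Aᵐᵒᵖ T] [SMulCommClass A Aᵐᵒᵖ T]

/-- The right module underlying a bimodule `T` is not changed by the passage to `A^e`-modules. -/
noncomputable def envModuleCatEquiv : envModuleCat k A T ≃ₗ[Aᵐᵒᵖ] T :=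
  letI : Module (A ⊗[k] Aᵐᵒᵖ) T := TensorProduct.Algebra.module
  have op_smul_eq (a : Aᵐᵒᵖ) (t : T) : (1 : A) ⊗ₜ[k] a • t = a • t := by
    rw [TensorProduct.Algebra.smul_def, one_smul]
  { AddEquiv.refl T with map_smul' := op_smul_eq }

variable {T}

lemma envModuleCatEquiv_smul (a : A) (t : envModuleCat k A T) :
    envModuleCatEquiv T (a • t) = a • envModuleCatEquiv T t :=
  letI : Module (A ⊗[k] Aᵐᵒᵖ) T := TensorProduct.Algebra.module
  have smul_eq (a : A) (t : T) : a ⊗ₜ[k] (1 : Aᵐᵒᵖ) • t = a • t := by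
    rw [TensorProduct.Algebra.smul_def, one_smul]
  smul_eq a t

end EnvModuleCat

scoped instance : Module.Projective Aᵐᵒᵖ (envModuleCat k A A) :=
  have e : Aᵐᵒᵖ ≃ₗ[Aᵐᵒᵖ] A := { opAddEquiv.symm with map_smul' := fun _ _ => rfl }
  .of_equiv (e.trans (envModuleCatEquiv A).symm)

end EnvelopingModule

open scoped EnvelopingModule

lemma SES.restrictScalars_op {K P V : ModuleCat.{u} (A ⊗[k] Aᵐᵒᵖ)}
    {f : K →ₗ[A ⊗[k] Aᵐᵒᵖ] P} {g : P →ₗ[A ⊗[k] Aᵐᵒᵖ] V} (h : SES (A ⊗[k] Aᵐᵒᵖ) f g) :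
    SES Aᵐᵒᵖ (X := .of _ K) (Y := .of _ P) (Z := .of _ V) (f.restrictScalars Aᵐᵒᵖ)
      (g.restrictScalars Aᵐᵒᵖ) :=
  ⟨h.1, h.2.1, SetLike.ext fun p => SetLike.ext_iff.1 h.2.2 p⟩

/-- The functor `- ⊗_A X` from bimodules to modules. -/
noncomputable def envTensor (k : Type u) [CommRing k] {A : Type u} [Ring A] [Algebra k A]
    (X : ModuleCat.{u} A) : ModuleCat.{u} (A ⊗[k] Aᵐᵒᵖ) ⥤ ModuleCat.{u} A where
  obj W := .of A (BalancedTensor A W X)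
  map f := ModuleCat.ofHom
    (mapₗ A (f.hom.restrictScalars Aᵐᵒᵖ) (f.hom.restrictScalars A).map_smul LinearMap.id)
  map_id _ := ModuleCat.hom_ext (linearMap_ext fun _ _ => rfl)
  map_comp _ _ := ModuleCat.hom_ext (linearMap_ext fun _ _ => rfl)

namespace envTensor

variable (X : ModuleCat.{u} A)

instance : (envTensor k X).Additive where
  map_add {_ _ f g} := ModuleCat.hom_ext (linearMap_ext fun w x =>
    DFunLike.congr_fun (map_add (tmul A) (f w) (g w)) x)

/-- For a bimodule `T`, the notation `T ⊗_A X` is unambiguous. -/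
noncomputable def objEnvModuleCatEquiv (T : Type u) [AddCommGroup T] [Module k T] [Module A T]
    [Module Aᵐᵒᵖ T] [IsScalarTower k A T] [IsScalarTower k Aᵐᵒᵖ T] [SMulCommClass A Aᵐᵒᵖ T] :
    (envTensor k X).obj (envModuleCat k A T) ≃ₗ[A] BalancedTensor A T X :=
  letI e := EnvelopingModule.envModuleCatEquiv (k := k) (A := A) T
  LinearEquiv.ofLinearMap
    (mapₗ A e.toLinearMap EnvelopingModule.envModuleCatEquiv_smul LinearMap.id)
    (mapₗ A e.symm.toLinearMap
      (fun a t => (EnvelopingModule.envModuleCatEquiv_smul a (e.symm t)).symm) LinearMap.id)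
    (linearMap_ext fun _ _ => rfl) (linearMap_ext fun _ _ => rfl)

/-- A sequence of bimodules which ends in a right projective one splits as a sequence of right
modules. -/
lemma map_ses {K P V : ModuleCat.{u} (A ⊗[k] Aᵐᵒᵖ)} [Module.Projective Aᵐᵒᵖ V]
    {f : K →ₗ[A ⊗[k] Aᵐᵒᵖ] P} {g : P →ₗ[A ⊗[k] Aᵐᵒᵖ] V} (h : SES (A ⊗[k] Aᵐᵒᵖ) f g) :
    SES A ((envTensor k X).map (ModuleCat.ofHom f)).hom
      ((envTensor k X).map (ModuleCat.ofHom g)).hom := by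
  obtain ⟨r, s, hrf, hgs, hfr⟩ := h.restrictScalars_op.exists_splitting
  have hr : (map (Y := X) r LinearMap.id).comp (map (f.restrictScalars Aᵐᵒᵖ) LinearMap.id) =
      .id _ := by rw [← map_comp_left, hrf, map_id]
  have hs : (map (Y := X) (g.restrictScalars Aᵐᵒᵖ) LinearMap.id).comp (map s LinearMap.id) =
      .id _ := by rw [← map_comp_left, hgs, map_id]
  have hrs : (map (Y := X) (f.restrictScalars Aᵐᵒᵖ) LinearMap.id).comp (map r LinearMap.id) +
      (map s LinearMap.id).comp (map (g.restrictScalars Aᵐᵒᵖ) LinearMap.id) = .id _ := by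
    rw [← map_comp_left, ← map_comp_left, ← map_add_left, hfr, map_id]
  refine SES.of_splitting (r := map r LinearMap.id) (s := map s LinearMap.id)
    (DFunLike.congr_fun hr) (DFunLike.congr_fun hs) ?_ (DFunLike.congr_fun hrs)
  rw [← ModuleCat.hom_comp, ← Functor.map_comp, ← ModuleCat.ofHom_comp, h.comp_eq_zero]
  exact congrArg ModuleCat.Hom.hom (Functor.map_zero (envTensor k X) K V)

end envTensor

lemma projective_op_of_projective [Module.Projective k A] (P : ModuleCat.{u} (A ⊗[k] Aᵐᵒᵖ))
    [Module.Finite (A ⊗[k] Aᵐᵒᵖ) P] [Module.Projective (A ⊗[k] Aᵐᵒᵖ) P] :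
    Module.Projective Aᵐᵒᵖ P := by
  let F : ModuleCat.{u} (A ⊗[k] Aᵐᵒᵖ) ⥤ ModuleCat.{u} Aᵐᵒᵖ := ModuleCat.restrictScalars
    (Algebra.TensorProduct.includeRight : Aᵐᵒᵖ →ₐ[k] A ⊗[k] Aᵐᵒᵖ).toRingHom
  let e : Aᵐᵒᵖ ⊗[k] A ≃ₗ[Aᵐᵒᵖ] F.obj (.of _ (A ⊗[k] Aᵐᵒᵖ)) :=
    { (TensorProduct.comm k Aᵐᵒᵖ A).toAddEquiv with
      map_smul' := fun b t => by
        change TensorProduct.comm k Aᵐᵒᵖ A (b • t) =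
          ((1 : A) ⊗ₜ[k] b) * TensorProduct.comm k Aᵐᵒᵖ A t
        induction t with
        | zero => simp
        | tmul c a => simp [TensorProduct.smul_tmul']
        | add t₁ t₂ h₁ h₂ => simp only [smul_add, map_add, mul_add, h₁, h₂] }
  have : Module.Projective Aᵐᵒᵖ (F.obj (.of _ (A ⊗[k] Aᵐᵒᵖ))) := .of_equiv e
  exact projective_obj (F := F) (X := P)

namespace envTensor

section Contract

variable {X : Type*} [AddCommGroup X] [Module A X] [Module k X] [IsScalarTower k A X]

variable (X) in
/-- The map `(a ⊗ b, x) ↦ a ⊗ b x`. -/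
noncomputable def contract : A ⊗[k] Aᵐᵒᵖ →ₗ[k] X →ₗ[k] A ⊗[k] X :=
  TensorProduct.lift <| LinearMap.mk₂ k
    (fun a b => TensorProduct.mk k A X a ∘ₗ Algebra.lsmul k k X b.unop)
    (fun a₁ a₂ b => by ext; simp) (fun c a b => by ext; simp)
    (fun a b₁ b₂ => by ext; simp [TensorProduct.tmul_add]) fun c a b => by ext; simp

@[simp]
lemma contract_tmul (a : A) (b : Aᵐᵒᵖ) (x : X) :
    contract X (a ⊗ₜ[k] b) x = a ⊗ₜ (b.unop • x) :=
  rfl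

lemma contract_mul_left (a : A) (t : A ⊗[k] Aᵐᵒᵖ) (x : X) :
    contract X ((a ⊗ₜ 1) * t) x = a • contract X t x := by
  induction t with
  | zero => simp
  | tmul b c => simp [TensorProduct.smul_tmul']
  | add t₁ t₂ h₁ h₂ => simp only [mul_add, map_add, smul_add, LinearMap.add_apply, h₁, h₂]

lemma contract_op_mul (a : A) (t : A ⊗[k] Aᵐᵒᵖ) (x : X) :
    contract X ((1 ⊗ₜ op a) * t) x = contract X t (a • x) := by
  induction t with
  | zero => simp
  | tmul b c => simp [mul_smul]
  | add t₁ t₂ h₁ h₂ => simp only [mul_add, map_add, LinearMap.add_apply, h₁, h₂]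

end Contract

section FreeBimodule

variable {X : ModuleCat.{u} A} {W : ModuleCat.{u} (A ⊗[k] Aᵐᵒᵖ)}

lemma tmul_tmul_eq (e : (A ⊗[k] Aᵐᵒᵖ) ≃ₗ[A ⊗[k] Aᵐᵒᵖ] W) (a : A) (b : Aᵐᵒᵖ) (x : X) :
    tmul A (e (a ⊗ₜ b)) x = tmul A (e (a ⊗ₜ 1)) (b.unop • x) := by
  rw [← op_smul_tmul, EnvelopingModule.op_smul_def, ← map_smul, smul_eq_mul]
  simp

variable [Module k X] [IsScalarTower k A X]

/-- The map `(a ⊗ b) ⊗ x ↦ a ⊗ b x`, for a bimodule `W` identified with `A^e`. -/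
noncomputable def toTensor (e : (A ⊗[k] Aᵐᵒᵖ) ≃ₗ[A ⊗[k] Aᵐᵒᵖ] W) :
    BalancedTensor A W X →ₗ[A] A ⊗[k] X :=
  liftₗ
    (AddMonoidHom.mk' (fun w => (contract X (e.symm w)).toAddMonoidHom) fun w₁ w₂ => by
      ext; simp)
    (fun r w x => by
      change contract X (e.symm (((1 : A) ⊗ₜ[k] op r) • w)) x = contract X (e.symm w) (r • x)
      rw [map_smul, smul_eq_mul, contract_op_mul])
    fun a w x => by
      change contract X (e.symm ((a ⊗ₜ[k] (1 : Aᵐᵒᵖ)) • w)) x = a • contract X (e.symm w) x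
      rw [map_smul, smul_eq_mul, contract_mul_left]

/-- The map `a ⊗ x ↦ (a ⊗ 1) ⊗ x`, for a bimodule `W` identified with `A^e`. -/
noncomputable def ofTensor (e : (A ⊗[k] Aᵐᵒᵖ) ≃ₗ[A ⊗[k] Aᵐᵒᵖ] W) :
    A ⊗[k] X →ₗ[A] BalancedTensor A W X :=
  { TensorProduct.liftAddHom
      (AddMonoidHom.mk' (fun a : A => tmul A (e (a ⊗ₜ[k] (1 : Aᵐᵒᵖ)))) fun a b => by
        rw [TensorProduct.add_tmul, map_add, map_add])
      (fun c a x => by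
        change tmul A (e ((c • a) ⊗ₜ 1)) x = tmul A (e (a ⊗ₜ 1)) (c • x)
        rw [TensorProduct.smul_tmul, tmul_tmul_eq, unop_smul, unop_one, smul_assoc, one_smul]) with
    map_smul' := fun a t => by
      induction t with
      | zero => simp
      | tmul b x =>
        change tmul A (e ((a • b) ⊗ₜ 1)) x = tmul A (a • e (b ⊗ₜ 1)) x
        rw [EnvelopingModule.smul_def, ← map_smul, smul_eq_mul, smul_eq_mul,
          Algebra.TensorProduct.tmul_mul_tmul, one_mul]
      | add t₁ t₂ h₁ h₂ => simp_all }

lemma ofTensor_contract (e : (A ⊗[k] Aᵐᵒᵖ) ≃ₗ[A ⊗[k] Aᵐᵒᵖ] W) (t : A ⊗[k] Aᵐᵒᵖ) (x : X) :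
    ofTensor e (contract X t x) = tmul A (e t) x := by
  induction t with
  | zero => simp
  | tmul a b => exact (tmul_tmul_eq e a b x).symm
  | add t₁ t₂ h₁ h₂ => simp only [map_add, LinearMap.add_apply, AddMonoidHom.add_apply, h₁, h₂]

lemma isSummand_obj (e : (A ⊗[k] Aᵐᵒᵖ) ≃ₗ[A ⊗[k] Aᵐᵒᵖ] W) :
    IsSummand A ((envTensor k X).obj W) (A ⊗[k] X) :=
  ⟨toTensor e, ofTensor e, linearMap_ext fun w x =>
    (ofTensor_contract e (e.symm w) x).trans (by rw [e.apply_symm_apply]; rfl)⟩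

end FreeBimodule

end envTensor

instance envTensor.projective_obj_self {k : Type u} [Field k] {A : Type u} [Ring A] [Algebra k A]
    (X : ModuleCat.{u} A) :
    Module.Projective A ((envTensor k X).obj (.of _ (A ⊗[k] Aᵐᵒᵖ))) := by
  let _ : Module k X := Module.compHom X (algebraMap k A)
  have : IsScalarTower k A X := .of_compHom k A X
  exact (envTensor.isSummand_obj (.refl _ _)).projective

end EnvelopingAlgebra

section Syzygies

variable {R : Type u} [Ring R]

lemma IsSyzygyStep.of_equiv {W W' K : ModuleCat.{u} R} (h : IsSyzygyStep R W K) (e : W ≃ₗ[R] W') :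
    IsSyzygyStep R W' K := by
  obtain ⟨P, hP, hP', f, g, hf, hg, hfg⟩ := h
  exact ⟨P, hP, hP', f, e.toLinearMap ∘ₗ g, hf, e.surjective.comp hg, by rw [hfg, e.ker_comp]⟩

lemma IsNthSyzygy.succ_of_isSyzygyStep {l : ℕ} {W K K' : ModuleCat.{u} R}
    (h : IsNthSyzygy R l W K) (hK' : IsSyzygyStep R K K') : IsNthSyzygy R (l + 1) W K' := by
  induction l generalizing W with
  | zero =>
    obtain ⟨e⟩ := h
    exact ⟨K', hK'.of_equiv e, ⟨.refl R K'⟩⟩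
  | succ l ih =>
    obtain ⟨K₁, hK₁, hK⟩ := h
    exact ⟨K₁, hK₁, ih hK⟩

lemma exists_isNthSyzygy {𝒜 : ℕ → Set (ModuleCat.{u} R)}
    (h : ∀ n, ∀ X ∈ 𝒜 (n + 1), ∃ Z ∈ 𝒜 n, IsSyzygyStep R Z X) (i l : ℕ) {X : ModuleCat.{u} R}
    (hX : X ∈ 𝒜 (i + l)) : ∃ Z ∈ 𝒜 i, IsNthSyzygy R l Z X := by
  induction l generalizing X with
  | zero => exact ⟨X, hX, ⟨.refl R X⟩⟩
  | succ l ih =>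
    obtain ⟨K, hK, hKX⟩ := h (i + l) X hX
    obtain ⟨Z, hZ, hZK⟩ := ih hK
    exact ⟨Z, hZ, hZK.succ_of_isSyzygyStep hKX⟩

lemma exists_isSyzygyStep_of_mem_syzygyCat (n : ℕ) :
    ∀ X ∈ syzygyCat R (n + 1), ∃ Z ∈ syzygyCat R n, IsSyzygyStep R Z X :=
  fun _ ⟨_, P, K, hP, hP', hK, hfg⟩ => ⟨K, hK, P, hP, hP', hfg⟩

lemma exists_isSyzygyStep_of_mem_infSyzygyCat :
    ∀ X ∈ infSyzygyCat R, ∃ Z ∈ infSyzygyCat R, IsSyzygyStep R Z X := by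
  rintro X ⟨-, K, P, ⟨e⟩, h⟩
  obtain ⟨hP, hP', f, g, hf, hg, hfg⟩ := h 0
  exact ⟨K 1, ⟨.of_surjective g hg, fun i => K (i + 1), fun i => P (i + 1), ⟨.refl R _⟩,
      fun i => h (i + 1)⟩,
    P 0, hP, hP', f ∘ₗ e.symm.toLinearMap, g, hf.comp e.symm.injective, hg, by
      rw [LinearEquiv.range_comp, hfg]⟩

lemma syzygyCat_subset_fgModules : ∀ n : ℕ, syzygyCat R n ⊆ fgModules R
  | 0 => subset_rfl
  | _ + 1 => fun _ hX => hX.1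

lemma infSyzygyCat_subset_fgModules : infSyzygyCat R ⊆ fgModules R :=
  fun _ hX => hX.1

variable {S : Type u} [Ring S] (F : ModuleCat.{u} R ⥤ ModuleCat.{u} S) [F.Additive]

lemma isSummand_obj_prod (X Y : ModuleCat.{u} R) :
    IsSummand S (F.obj (.of R (X × Y))) (F.obj X × F.obj Y) := by
  let p₁ : ModuleCat.of R (X × Y) ⟶ X := ModuleCat.ofHom (.fst R X Y)
  let p₂ : ModuleCat.of R (X × Y) ⟶ Y := ModuleCat.ofHom (.snd R X Y)
  let j₁ : X ⟶ ModuleCat.of R (X × Y) := ModuleCat.ofHom (.inl R X Y)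
  let j₂ : Y ⟶ ModuleCat.of R (X × Y) := ModuleCat.ofHom (.inr R X Y)
  have hpj : p₁ ≫ j₁ + p₂ ≫ j₂ = 𝟙 _ :=
    ModuleCat.hom_ext (LinearMap.ext fun x => Prod.fst_add_snd x)
  refine ⟨(F.map p₁).hom.prod (F.map p₂).hom, (F.map j₁).hom.coprod (F.map j₂).hom, ?_⟩
  have := congrArg ModuleCat.Hom.hom (congrArg F.map hpj)
  rw [F.map_add, F.map_comp, F.map_comp, F.map_id] at this
  simpa [LinearMap.ext_iff] using this

variable {F} in
lemma StablyIsomorphic.isStableSummand_obj [Module.Projective S (F.obj (.of R R))]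
    {Z W : ModuleCat.{u} R} (h : StablyIsomorphic R Z W) :
    IsStableSummand S (F.obj Z) (F.obj W) := by
  obtain ⟨P, Q, -, -, _, _, ⟨e⟩⟩ := h
  have hZ : IsSummand R Z (ModuleCat.of R (W × Q)) := IsSummand.prod_left.trans (.of_equiv e)
  exact ⟨F.obj Q, projective_obj, (hZ.map F).trans (isSummand_obj_prod F W Q)⟩

end Syzygies

section BimoduleSyzygies

open scoped EnvelopingModule

lemma IsSyzygyStep.projective_op {k : Type u} [CommRing k] {A : Type u} [Ring A] [Algebra k A]
    [Module.Projective k A] {V K : ModuleCat.{u} (A ⊗[k] Aᵐᵒᵖ)} [Module.Projective Aᵐᵒᵖ V]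
    (h : IsSyzygyStep (A ⊗[k] Aᵐᵒᵖ) V K) : Module.Projective Aᵐᵒᵖ K := by
  obtain ⟨P, _, _, f, g, hfg⟩ := h
  have := projective_op_of_projective P
  exact hfg.restrictScalars_op.projective_left

lemma IsNthSyzygy.isStableSummand_envTensor_obj {k : Type u} [Field k] {A : Type u} [Ring A]
    [Algebra k A] {X Z Y : ModuleCat.{u} A} {l : ℕ}
    {V K : ModuleCat.{u} (A ⊗[k] Aᵐᵒᵖ)} [Module.Projective Aᵐᵒᵖ V]
    (hK : IsNthSyzygy (A ⊗[k] Aᵐᵒᵖ) l V K) (hY : IsNthSyzygy A l Z Y)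
    (h : IsStableSummand A Z ((envTensor k X).obj V)) :
    IsStableSummand A Y ((envTensor k X).obj K) := by
  induction l generalizing Z V with
  | zero =>
    obtain ⟨e⟩ := hK
    obtain ⟨e'⟩ := hY
    exact ((IsSummand.of_equiv e').isStableSummand.trans h).trans
      ((IsSummand.of_equiv e.symm).map (envTensor k X)).isStableSummand
  | succ l ih =>
    obtain ⟨V₁, hV₁, hK⟩ := hK
    obtain ⟨Z₁, ⟨P', _, _, f', g', hfg'⟩, hY⟩ := hY
    have := hV₁.projective_op
    obtain ⟨P, _, _, f, g, hfg⟩ := hV₁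
    have : Module.Projective A ((envTensor k X).obj P) := projective_obj
    exact ih hK hY (h.of_ses hfg' (envTensor.map_ses X hfg))

end BimoduleSyzygies

namespace SingularEquivalenceOfMoritaTypeWithLevel

variable {k : Type u} [Field k] {A B : Type u} [Ring A] [Ring B] [Algebra k A] [Algebra k B]
  {M : Type u} [AddCommGroup M] [Module k M] [Module A M] [Module Bᵐᵒᵖ M]
  {N : Type u} [AddCommGroup N] [Module k N] [Module B N] [Module Aᵐᵒᵖ N] {l : ℕ}

lemma symm (h : SingularEquivalenceOfMoritaTypeWithLevel k A B M N l) :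
    SingularEquivalenceOfMoritaTypeWithLevel k B A N M l := by
  obtain ⟨hAM, hAM', hMB, hMB', hBN, hBN', hNA, hNA', hMN, hNM⟩ := h
  exact ⟨hBN, hBN', hNA, hNA', hAM, hAM', hMB, hMB', hNM, hMN⟩

variable [IsScalarTower k A M] [IsScalarTower k Bᵐᵒᵖ M] [SMulCommClass A Bᵐᵒᵖ M]
  [IsScalarTower k B N] [IsScalarTower k Aᵐᵒᵖ N] [SMulCommClass B Aᵐᵒᵖ N]

open BalancedTensor
open scoped EnvelopingModule

/-- The bimodule syzygies of `A`, tensored with `Z`, compute the syzygies of `Z` up to projective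
summands. -/
lemma isStableSummand_obj (h : SingularEquivalenceOfMoritaTypeWithLevel k A B M N l)
    {Z Y : ModuleCat.{u} A} (hY : IsNthSyzygy A l Z Y) :
    IsStableSummand A Y ((tensorFunctor B A M).obj ((tensorFunctor A B N).obj Z)) := by
  obtain ⟨-, -, -, -, -, -, -, -, hMN, -⟩ := h
  obtain ⟨K, hK, hKMN⟩ := hMN (BalancedTensor B M N) (fun m n => tmul B m n)
    isTensorProductOver_tmul (fun _ _ _ => rfl) (fun _ _ _ => rfl) (fun _ _ _ => rfl)
  have hZ : IsSummand A Z ((envTensor k Z).obj (envModuleCat k A A)) :=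
    .of_equiv ((envTensor.objEnvModuleCatEquiv Z A).trans (leftUnitEquiv A Z)).symm
  have hassoc : IsSummand A ((envTensor k Z).obj (envModuleCat k A (BalancedTensor B M N)))
      ((tensorFunctor B A M).obj ((tensorFunctor A B N).obj Z)) :=
    .of_equiv ((envTensor.objEnvModuleCatEquiv Z _).trans (assocEquiv B M A A Z N))
  exact ((hK.isStableSummand_envTensor_obj hY hZ.isStableSummand).trans
    hKMN.symm.isStableSummand_obj).trans hassoc.isStableSummand

lemma extDimCat_le (h : SingularEquivalenceOfMoritaTypeWithLevel k A B M N l)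
    {𝒜 𝒜' : Set (ModuleCat.{u} A)} {ℬ : Set (ModuleCat.{u} B)} (h𝒜' : 𝒜' ⊆ fgModules A)
    (h𝒜 : ∀ Y ∈ 𝒜', ∃ Z ∈ 𝒜, IsNthSyzygy A l Z Y)
    (hℬ : ∀ Z ∈ 𝒜, (tensorFunctor A B N).obj Z ∈ ℬ) : extDimCat A 𝒜' ≤ extDimCat B ℬ := by
  obtain ⟨_, -, -, _, -⟩ := id h
  refine (tensorFunctor.preservesSES B A M).extDimCat_le h𝒜' fun Y hY => ?_
  obtain ⟨Z, hZ, hZY⟩ := h𝒜 Y hY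
  exact ⟨_, hℬ Z hZ, h.isStableSummand_obj hZY⟩

lemma omegaExtDim_le (h : SingularEquivalenceOfMoritaTypeWithLevel k A B M N l) :
    omegaExtDim A ≤ omegaExtDim B := by
  obtain ⟨-, -, -, -, _, _, -, _, -⟩ := id h
  refine le_iInf fun i => (iInf_le _ (i + l)).trans ?_
  exact h.extDimCat_le (syzygyCat_subset_fgModules _)
    (fun Y => exists_isNthSyzygy exists_isSyzygyStep_of_mem_syzygyCat i l)
    fun Z => (tensorFunctor.preservesSES A B N).obj_mem_syzygyCat

lemma extDimCat_infSyzygyCat_le (h : SingularEquivalenceOfMoritaTypeWithLevel k A B M N l) :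
    extDimCat A (infSyzygyCat A) ≤ extDimCat B (infSyzygyCat B) := by
  obtain ⟨-, -, -, -, _, _, -, _, -⟩ := id h
  exact h.extDimCat_le infSyzygyCat_subset_fgModules
    (fun Y => exists_isNthSyzygy (𝒜 := fun _ => infSyzygyCat A)
      (fun _ => exists_isSyzygyStep_of_mem_infSyzygyCat) 0 l)
    fun Z => (tensorFunctor.preservesSES A B N).obj_mem_infSyzygyCat

end SingularEquivalenceOfMoritaTypeWithLevel

theorem omegaExtDim_of_singularEquivalence_level_general {k : Type u} [Field k] {A B : Type u}
    [Ring A] [Ring B] [Algebra k A] [Algebra k B]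
    {M : Type u} [AddCommGroup M] [Module k M] [Module A M] [Module Bᵐᵒᵖ M]
    [IsScalarTower k A M] [IsScalarTower k Bᵐᵒᵖ M] [SMulCommClass A Bᵐᵒᵖ M]
    {N : Type u} [AddCommGroup N] [Module k N] [Module B N] [Module Aᵐᵒᵖ N]
    [IsScalarTower k B N] [IsScalarTower k Aᵐᵒᵖ N] [SMulCommClass B Aᵐᵒᵖ N] {l : ℕ}
    (h : SingularEquivalenceOfMoritaTypeWithLevel k A B M N l) :
    omegaExtDim A = omegaExtDim B ∧
      extDimCat A (infSyzygyCat A) = extDimCat B (infSyzygyCat B) :=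
  ⟨le_antisymm h.omegaExtDim_le h.symm.omegaExtDim_le,
    le_antisymm h.extDimCat_infSyzygyCat_le h.symm.extDimCat_infSyzygyCat_le⟩

section Statement

open scoped TensorProduct

variable (k : Type u) [Field k]
variable (A B : Type u) [Ring A] [Ring B] [Algebra k A] [Algebra k B]
variable [Module.Finite k A] [Module.Finite k B]
variable (M : Type u) [AddCommGroup M] [Module k M] [Module A M] [Module Bᵐᵒᵖ M]
variable [IsScalarTower k A M] [IsScalarTower k Bᵐᵒᵖ M] [SMulCommClass A Bᵐᵒᵖ M]
variable (N : Type u) [AddCommGroup N] [Module k N] [Module B N] [Module Aᵐᵒᵖ N]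
variable [IsScalarTower k B N] [IsScalarTower k Aᵐᵒᵖ N] [SMulCommClass B Aᵐᵒᵖ N]

/-- **Theorem 2.(2),(3)**: if the finite dimensional algebras `A` and `B` are singularly
equivalent of Morita type with level `l`, then `Ω-ext.dim(A) = Ω-ext.dim(B)` and
`ext.dim(Ω^∞(A-mod)) = ext.dim(Ω^∞(B-mod))`. -/
theorem omegaExtDim_of_singularEquivalence_level (l : ℕ)
    (h : SingularEquivalenceOfMoritaTypeWithLevel k A B M N l) :
    omegaExtDim A = omegaExtDim B ∧
      extDimCat A (infSyzygyCat A) = extDimCat B (infSyzygyCat B) :=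
  omegaExtDim_of_singularEquivalence_level_general h

end Statement

end ExtDim
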